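/- Geometric Divergence: Let D be a probability distribution over a set F of information resources and let F ∼ D. Identify the target set t ⊆ Ω, |t| = k, with its k-hot indicator vector 𝐭 ∈ {0,1}^n (so ‖𝐭‖ = √k), and let θ be the angle between 𝐭 and the vector v = E_{F∼D}[P̄_F] ∈ ℝ^n (i.e., cos θ = ⟨𝐭, v⟩/(‖𝐭‖·‖v‖)). Then for any q_min ∈ (0,1], Pr(q(t,F) ≥ q_min) ≤ √k · cos θ / q_min = ‖𝐭‖ cos θ / q_min. -/

import Mathlib

/-!
By linearity of expectation, `q(t,F)` has mean `⟨𝐭, v⟩`, so Markov's inequality bounds the probability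
by `⟨𝐭, v⟩ / q_min`. The averaged vector `v` is again a probability vector, hence
`0 < ‖v‖₂ ≤ ‖v‖₁ = 1`, and therefore `⟨𝐭, v⟩ ≤ ⟨𝐭, v⟩ / ‖v‖₂ = √k · cos θ`.
-/

open MeasureTheory

/-- **Geometric Divergence.**
Identifying the target set `t` (of size `k`) with its `k`-hot indicator vector
`𝐭 ∈ {0,1}^Ω` (so `‖𝐭‖ = √k`), and letting `θ` be the angle between `𝐭` and
`v = E_{F∼D}[P̄_F]` (so `cos θ = ⟨𝐭,v⟩/(‖𝐭‖·‖v‖)`), we have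
`Pr(q(t,F) ≥ q_min) ≤ √k · cos θ / q_min`. -/
theorem geometric_divergence
    {Ω F : Type*} [Fintype Ω] [MeasurableSpace F]
    (Pbar : F → Ω → ℝ)
    (hP0 : ∀ f ω, 0 ≤ Pbar f ω)
    (hP1 : ∀ f, ∑ ω, Pbar f ω = 1)
    (D : Measure F) [IsProbabilityMeasure D]
    (t : Finset Ω) (k : ℕ) (hk : t.card = k)
    (hmeas : Measurable fun f => ∑ ω ∈ t, Pbar f ω)
    (hint : ∀ ω, Integrable (fun f => Pbar f ω) D)
    (v : Ω → ℝ) (hv : ∀ ω, v ω = ∫ f, Pbar f ω ∂D)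
    (θ : ℝ)
    (hθ : Real.cos θ =
      (∑ ω ∈ t, v ω) / (Real.sqrt k * Real.sqrt (∑ ω, (v ω) ^ 2)))
    (qmin : ℝ) (hqmin : qmin ∈ Set.Ioc (0 : ℝ) 1) :
    (D {f | qmin ≤ ∑ ω ∈ t, Pbar f ω}).toReal
      ≤ Real.sqrt k * Real.cos θ / qmin := by
  obtain ⟨hq, -⟩ := hqmin
  have hv0 : ∀ ω, 0 ≤ v ω := fun ω => hv ω ▸ integral_nonneg fun f => hP0 f ω
  have hv1 : ∑ ω, v ω = 1 := by
    simp_rw [hv]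
    rw [← integral_finsetSum _ fun ω _ => hint ω]
    simp [hP1]
  have hmean : ∫ f, ∑ ω ∈ t, Pbar f ω ∂D = ∑ ω ∈ t, v ω := by
    simp_rw [hv]
    exact integral_finsetSum _ fun ω _ => hint ω
  have markov : qmin * (D {f | qmin ≤ ∑ ω ∈ t, Pbar f ω}).toReal ≤ ∑ ω ∈ t, v ω := by
    rw [← hmean]
    exact mul_meas_ge_le_integral_of_nonneg
      (Filter.Eventually.of_forall fun f => Finset.sum_nonneg fun ω _ => hP0 f ω)
      (integrable_finsetSum _ fun ω _ => hint ω) qmin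
  have hsq_le : Real.sqrt (∑ ω, v ω ^ 2) ≤ 1 := by
    rw [Real.sqrt_le_one]
    calc ∑ ω, v ω ^ 2 ≤ (∑ ω, v ω) ^ 2 :=
          Finset.sum_sq_le_sq_sum_of_nonneg fun ω _ => hv0 ω
      _ = 1 := by rw [hv1, one_pow]
  -- `v ≠ 0` because its coordinates sum to `1`; hence the quotient by `‖v‖` is a genuine one.
  have hsq_pos : 0 < Real.sqrt (∑ ω, v ω ^ 2) := by
    refine Real.sqrt_pos.2 ((Finset.sum_nonneg fun ω _ => sq_nonneg (v ω)).lt_of_ne' fun h => ?_)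
    rw [Finset.sum_eq_zero_iff_of_nonneg fun ω _ => sq_nonneg (v ω)] at h
    have : ∑ ω, v ω = 0 := Finset.sum_eq_zero fun ω hω => pow_eq_zero_iff two_ne_zero |>.1 (h ω hω)
    linarith
  rw [le_div_iff₀ hq, mul_comm]
  refine markov.trans ?_
  rcases Nat.eq_zero_or_pos k with rfl | hkpos
  · -- For an empty target the division by `√k = 0` is a junk value, but both sides vanish.
    rw [Finset.card_eq_zero.1 hk]
    simp
  · have hsk : Real.sqrt k ≠ 0 := (Real.sqrt_pos.2 (Nat.cast_pos.2 hkpos)).ne'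
    rw [hθ, ← div_div, mul_div_assoc', mul_div_cancel₀ _ hsk]
    exact le_div_self (Finset.sum_nonneg fun ω _ => hv0 ω) hsq_pos hsq_le
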